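/- Let C be a model category whose underlying category is preadditive and has binary biproducts, and let γ : C ⟶ Ho(C) denote the localization functor at the weak equivalences. Then for any objects A, B of C, the object γ(A ⊕ B) together with the images under γ of the biproduct projections A ⊕ B ⟶ A and A ⊕ B ⟶ B is a product of γ(A) and γ(B) in Ho(C), and together with the images under γ of the biproduct inclusions A ⟶ A ⊕ B and B ⟶ A ⊕ B is a coproduct of γ(A) and γ(B) in Ho(C). -/

import Mathlib

open CategoryTheory CategoryTheory.Limits

universe v u

/-- `f` is a retract of `g` in the arrow category. -/
def IsRetractOf {C : Type u} [Category.{v} C] {X Y X' Y' : C}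
    (f : X ⟶ Y) (g : X' ⟶ Y') : Prop :=
  ∃ (iX : X ⟶ X') (rX : X' ⟶ X) (iY : Y ⟶ Y') (rY : Y' ⟶ Y),
    iX ≫ rX = 𝟙 X ∧ iY ≫ rY = 𝟙 Y ∧ iX ≫ g = f ≫ iY ∧ g ≫ rY = rX ≫ f

/-- A (Quillen closed) model structure on a finitely bicomplete category `C`: classes of
weak equivalences, fibrations and cofibrations satisfying the two-out-of-three axiom,
closure under retracts, the lifting axioms and the factorization axioms. -/
structure ModelStructure (C : Type u) [Category.{v} C]
    [HasFiniteLimits C] [HasFiniteColimits C] where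
  /-- weak equivalences -/
  W : MorphismProperty C
  /-- fibrations -/
  Fib : MorphismProperty C
  /-- cofibrations -/
  Cof : MorphismProperty C
  W_comp : ∀ {X Y Z : C} (f : X ⟶ Y) (g : Y ⟶ Z), W f → W g → W (f ≫ g)
  W_cancel_left : ∀ {X Y Z : C} (f : X ⟶ Y) (g : Y ⟶ Z), W f → W (f ≫ g) → W g
  W_cancel_right : ∀ {X Y Z : C} (f : X ⟶ Y) (g : Y ⟶ Z), W g → W (f ≫ g) → W f
  W_retract : ∀ {X Y X' Y' : C} (f : X ⟶ Y) (g : X' ⟶ Y'), IsRetractOf f g → W g → W f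
  Fib_retract : ∀ {X Y X' Y' : C} (f : X ⟶ Y) (g : X' ⟶ Y'), IsRetractOf f g → Fib g → Fib f
  Cof_retract : ∀ {X Y X' Y' : C} (f : X ⟶ Y) (g : X' ⟶ Y'), IsRetractOf f g → Cof g → Cof f
  lift_cof_trivFib : ∀ {A B X Y : C} (i : A ⟶ B) (p : X ⟶ Y),
    Cof i → Fib p → W p → HasLiftingProperty i p
  lift_trivCof_fib : ∀ {A B X Y : C} (i : A ⟶ B) (p : X ⟶ Y),
    Cof i → W i → Fib p → HasLiftingProperty i p
  factor_cof_trivFib : ∀ {X Y : C} (f : X ⟶ Y),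
    ∃ (Z : C) (i : X ⟶ Z) (p : Z ⟶ Y), Cof i ∧ Fib p ∧ W p ∧ i ≫ p = f
  factor_trivCof_fib : ∀ {X Y : C} (f : X ⟶ Y),
    ∃ (Z : C) (i : X ⟶ Z) (p : Z ⟶ Y), Cof i ∧ W i ∧ Fib p ∧ i ≫ p = f

namespace ModelStructure

variable {C : Type u} [Category.{v} C] [HasFiniteLimits C] [HasFiniteColimits C]

/-- An object is fibrant if the map to the terminal object is a fibration. -/
def Fibrant (M : ModelStructure C) (X : C) : Prop := M.Fib (terminal.from X)

/-- An object is cofibrant if the map from the initial object is a cofibration. -/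
def Cofibrant (M : ModelStructure C) (X : C) : Prop := M.Cof (initial.to X)

end ModelStructure

/-! Every weak equivalence is a trivial cofibration followed by a trivial fibration. By the retract
argument, a morphism with the right lifting property against all cofibrations is a weak
equivalence, and so is one with the left lifting property against all fibrations. Viewing `⊞` as a
product, it preserves right lifting properties; viewing it as a coproduct, it preserves left lifting
properties. Hence weak equivalences are stable under `biprod.map`, so the adjunctions between the
diagonal functor and `⊞` descend to the localization. -/

section LocalizationCoproducts

variable {C : Type*} [Category* C]

lemma isStableUnderLimitsOfShape_op (W : MorphismProperty C) (J : Type*) [Category* J]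
    [W.IsStableUnderColimitsOfShape J] : W.op.IsStableUnderLimitsOfShape Jᵒᵖ where
  condition _ _ _ _ h₁ h₂ f hf φ hφ :=
    MorphismProperty.IsStableUnderColimitsOfShape.condition _ _ _ _
      (isColimitCoconeUnopOfCone _ h₂) (isColimitCoconeUnopOfCone _ h₁) (NatTrans.unop f)
      (fun j ↦ hf (.op j)) φ.unop fun j ↦ congrArg Quiver.Hom.unop (hφ (.op j))

lemma isStableUnderLimitsOfShape_of_equivalence (W : MorphismProperty C) {J K : Type*}
    [Category* J] [Category* K] (e : J ≌ K) [W.IsStableUnderLimitsOfShape J] :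
    W.IsStableUnderLimitsOfShape K where
  condition _ _ _ _ h₁ h₂ f hf φ hφ :=
    MorphismProperty.IsStableUnderLimitsOfShape.condition _ _ _ _ (h₁.whiskerEquivalence e)
      (h₂.whiskerEquivalence e) (Functor.whiskerLeft e.functor f) (fun _ ↦ hf _) φ fun _ ↦ hφ _

lemma isStableUnderProductsOfShape_op (W : MorphismProperty C) (J : Type*)
    [W.IsStableUnderCoproductsOfShape J] : W.op.IsStableUnderProductsOfShape J := by
  have := isStableUnderLimitsOfShape_op W (Discrete J)
  exact isStableUnderLimitsOfShape_of_equivalence W.op (Discrete.opposite J)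

lemma preservesCoproductsOfShape_of_isLocalization {D : Type*} [Category* D] (L : C ⥤ D)
    (W : MorphismProperty C) [L.IsLocalization W] [W.ContainsIdentities] (J : Type) [Finite J]
    [HasCoproductsOfShape J C] [W.IsStableUnderCoproductsOfShape J] :
    PreservesColimitsOfShape (Discrete J) L := by
  have := isStableUnderProductsOfShape_op W J
  have := Localization.preservesProductsOfShape L.op W.op J
  have := preservesLimitsOfShape_of_equiv (Discrete.opposite J).symm L.op
  exact preservesColimitsOfShape_of_op (Discrete J) L

end LocalizationCoproducts

section BiproductMaps

variable {C : Type*} [Category* C] [HasZeroMorphisms C] [HasBinaryBiproducts C]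

lemma exists_iso_biprod_of_isLimit {F : Discrete WalkingPair ⥤ C} {c : Cone F} (hc : IsLimit c) :
    ∃ e : c.pt ≅ F.obj ⟨.left⟩ ⊞ F.obj ⟨.right⟩,
      e.hom ≫ biprod.fst = c.π.app ⟨.left⟩ ∧ e.hom ≫ biprod.snd = c.π.app ⟨.right⟩ := by
  have hom_comp := hc.conePointsIsoOfNatIso_hom_comp (BinaryBiproduct.isLimit _ _)
    (diagramIsoPair F)
  exact ⟨_, (hom_comp ⟨.left⟩).trans (by simp), (hom_comp ⟨.right⟩).trans (by simp)⟩

lemma exists_biprod_iso_of_isColimit {F : Discrete WalkingPair ⥤ C} {c : Cocone F}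
    (hc : IsColimit c) :
    ∃ e : F.obj ⟨.left⟩ ⊞ F.obj ⟨.right⟩ ≅ c.pt,
      biprod.inl ≫ e.hom = c.ι.app ⟨.left⟩ ∧ biprod.inr ≫ e.hom = c.ι.app ⟨.right⟩ := by
  have comp_hom := (BinaryBiproduct.isColimit _ _).comp_coconePointsIsoOfNatIso_hom hc
    (diagramIsoPair F).symm
  exact ⟨_, (comp_hom ⟨.left⟩).trans (by simp), (comp_hom ⟨.right⟩).trans (by simp)⟩

lemma isStableUnderProductsOfShape_walkingPair {W : MorphismProperty C} [W.RespectsIso]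
    (hW : ∀ {X X' Y Y' : C} (f : X ⟶ X') (g : Y ⟶ Y'), W f → W g → W (biprod.map f g)) :
    W.IsStableUnderProductsOfShape WalkingPair where
  condition F G c d hc hd f hf φ hφ := by
    obtain ⟨e, e_fst, e_snd⟩ := exists_iso_biprod_of_isLimit hc
    obtain ⟨e', e'_fst, e'_snd⟩ := exists_iso_biprod_of_isLimit hd
    have square : e.hom ≫ biprod.map (f.app _) (f.app _) = φ ≫ e'.hom := by
      ext <;> simp [reassoc_of% e_fst, reassoc_of% e_snd, e'_fst, e'_snd, hφ]
    exact (W.arrow_mk_iso_iff (Arrow.isoMk e e' square)).2 (hW _ _ (hf _) (hf _))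

lemma isStableUnderCoproductsOfShape_walkingPair {W : MorphismProperty C} [W.RespectsIso]
    (hW : ∀ {X X' Y Y' : C} (f : X ⟶ X') (g : Y ⟶ Y'), W f → W g → W (biprod.map f g)) :
    W.IsStableUnderCoproductsOfShape WalkingPair where
  condition F G c d hc hd f hf φ hφ := by
    obtain ⟨e, inl_e, inr_e⟩ := exists_biprod_iso_of_isColimit hc
    obtain ⟨e', inl_e', inr_e'⟩ := exists_biprod_iso_of_isColimit hd
    have square : e.hom ≫ φ = biprod.map (f.app _) (f.app _) ≫ e'.hom := by
      ext <;> simp [reassoc_of% inl_e, reassoc_of% inr_e, inl_e', inr_e', hφ]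
    exact (W.arrow_mk_iso_iff (Arrow.isoMk e e' square)).1 (hW _ _ (hf _) (hf _))

variable {X X' Y Y' S T : C}

lemma hasLiftingProperty_biprod_map_right (i : S ⟶ T) (p : X ⟶ X') (q : Y ⟶ Y')
    [HasLiftingProperty i p] [HasLiftingProperty i q] :
    HasLiftingProperty i (biprod.map p q) where
  sq_hasLift {t b} sq := by
    have sq₁ : CommSq (t ≫ biprod.fst) i p (b ≫ biprod.fst) := ⟨by simp [← sq.w_assoc]⟩
    have sq₂ : CommSq (t ≫ biprod.snd) i q (b ≫ biprod.snd) := ⟨by simp [← sq.w_assoc]⟩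
    exact ⟨⟨{ l := biprod.lift sq₁.lift sq₂.lift }⟩⟩

lemma hasLiftingProperty_biprod_map_left (i : X ⟶ X') (j : Y ⟶ Y') (p : S ⟶ T)
    [HasLiftingProperty i p] [HasLiftingProperty j p] :
    HasLiftingProperty (biprod.map i j) p where
  sq_hasLift {t b} sq := by
    have sq₁ : CommSq (biprod.inl ≫ t) i p (biprod.inl ≫ b) := ⟨by simp [sq.w]⟩
    have sq₂ : CommSq (biprod.inr ≫ t) j p (biprod.inr ≫ b) := ⟨by simp [sq.w]⟩
    exact ⟨⟨{ l := biprod.desc sq₁.lift sq₂.lift }⟩⟩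

end BiproductMaps

lemma IsRetractOf.of_retractArrow {C : Type u} [Category.{v} C] {X Y X' Y' : C} {f : X ⟶ Y}
    {g : X' ⟶ Y'} (h : RetractArrow f g) : IsRetractOf f g :=
  ⟨h.i.left, h.r.left, h.i.right, h.r.right, h.retract_left, h.retract_right, h.i_w, h.r_w.symm⟩

namespace ModelStructure

variable {C : Type u} [Category.{v} C] [HasFiniteLimits C] [HasFiniteColimits C]
  (M : ModelStructure C)

instance : M.W.IsStableUnderRetracts where
  of_retract h := M.W_retract _ _ (.of_retractArrow h)

instance : M.W.ContainsIdentities where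
  id_mem X := by
    obtain ⟨_, _, _, -, -, hp, fac⟩ := M.factor_cof_trivFib (𝟙 X)
    exact M.W.of_retract (.ofRightLiftingProperty fac) hp

variable [HasZeroMorphisms C] [HasBinaryBiproducts C] {X X' Y Y' : C}

lemma W_biprod_map_of_trivFib {p : X ⟶ X'} {q : Y ⟶ Y'} (hp : M.Fib p) (hpW : M.W p)
    (hq : M.Fib q) (hqW : M.W q) : M.W (biprod.map p q) := by
  obtain ⟨_, i, _, hi, -, hr, fac⟩ := M.factor_cof_trivFib (biprod.map p q)
  have := M.lift_cof_trivFib i p hi hp hpW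
  have := M.lift_cof_trivFib i q hi hq hqW
  have := hasLiftingProperty_biprod_map_right i p q
  exact M.W.of_retract (.ofRightLiftingProperty fac) hr

lemma W_biprod_map_of_trivCof {i : X ⟶ X'} {j : Y ⟶ Y'} (hi : M.Cof i) (hiW : M.W i)
    (hj : M.Cof j) (hjW : M.W j) : M.W (biprod.map i j) := by
  obtain ⟨_, _, p, -, hk, hp, fac⟩ := M.factor_trivCof_fib (biprod.map i j)
  have := M.lift_trivCof_fib i p hi hiW hp
  have := M.lift_trivCof_fib j p hj hjW hp
  have := hasLiftingProperty_biprod_map_left i j p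
  exact M.W.of_retract (.ofLeftLiftingProperty fac) hk

lemma W_biprod_map {f : X ⟶ X'} {g : Y ⟶ Y'} (hf : M.W f) (hg : M.W g) :
    M.W (biprod.map f g) := by
  obtain ⟨_, i, p, hi, hp, hpW, rfl⟩ := M.factor_cof_trivFib f
  obtain ⟨_, j, q, hj, hq, hqW, rfl⟩ := M.factor_cof_trivFib g
  have hiW := M.W_cancel_right i p hpW hf
  have hjW := M.W_cancel_right j q hqW hg
  have map_comp : biprod.map (i ≫ p) (j ≫ q) = biprod.map i j ≫ biprod.map p q := by
    ext <;> simp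
  rw [map_comp]
  exact M.W_comp _ _ (M.W_biprod_map_of_trivCof hi hiW hj hjW)
    (M.W_biprod_map_of_trivFib hp hpW hq hqW)

instance : M.W.IsStableUnderProductsOfShape WalkingPair :=
  isStableUnderProductsOfShape_walkingPair fun _ _ ↦ M.W_biprod_map

instance : M.W.IsStableUnderCoproductsOfShape WalkingPair :=
  isStableUnderCoproductsOfShape_walkingPair fun _ _ ↦ M.W_biprod_map

end ModelStructure

theorem stmt_7_general {C : Type u} [Category.{v} C] [HasZeroMorphisms C] [HasBinaryBiproducts C]
    [HasFiniteLimits C] [HasFiniteColimits C] (M : ModelStructure C) {D : Type*} [Category* D]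
    (L : C ⥤ D) [L.IsLocalization M.W] (A B : C) :
    Nonempty (IsLimit (BinaryFan.mk
      (L.map (biprod.fst : A ⊞ B ⟶ A)) (L.map (biprod.snd : A ⊞ B ⟶ B)))) ∧
    Nonempty (IsColimit (BinaryCofan.mk
      (L.map (biprod.inl : A ⟶ A ⊞ B)) (L.map (biprod.inr : B ⟶ A ⊞ B)))) := by
  have := Localization.preservesProductsOfShape L M.W WalkingPair
  have := preservesCoproductsOfShape_of_isLocalization L M.W WalkingPair
  exact ⟨⟨mapIsLimitOfPreservesOfIsLimit L _ _ (BinaryBiproduct.isLimit A B)⟩,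
    ⟨mapIsColimitOfPreservesOfIsColimit L _ _ (BinaryBiproduct.isColimit A B)⟩⟩

/-- In a preadditive model category with binary biproducts, for objects
`A, B`, the image of `A ⊞ B` under the localization functor `γ : C ⥤ Ho(C)` together with the
images of the biproduct projections is a product of `γ(A)` and `γ(B)` in `Ho(C)`, and
together with the images of the biproduct inclusions it is a coproduct of `γ(A)` and `γ(B)`
in `Ho(C)`. -/
theorem stmt_7 {C : Type u} [Category.{v} C] [Preadditive C] [HasBinaryBiproducts C]
    [HasFiniteLimits C] [HasFiniteColimits C] (M : ModelStructure C) (A B : C) :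
    Nonempty (IsLimit (BinaryFan.mk
      (M.W.Q.map (biprod.fst : A ⊞ B ⟶ A)) (M.W.Q.map (biprod.snd : A ⊞ B ⟶ B)))) ∧
    Nonempty (IsColimit (BinaryCofan.mk
      (M.W.Q.map (biprod.inl : A ⟶ A ⊞ B)) (M.W.Q.map (biprod.inr : B ⟶ A ⊞ B)))) :=
  stmt_7_general M M.W.Q A B
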